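/- arXiv:0704.3109 — 11 statements merged into one kernel-verified Lean document; each statement's English description precedes it below -/
import Mathlib

section
/- Let (L,·) be a left quasigroup, (M,μ) a ternary system, and π : L → M a bijection. The family of maps R^{(L,M,π)}(λ) (λ ∈ L) is a dynamical Yang–Baxter map associated with L, L, and the multiplication, i.e. with φ(λ,u) = λ·u, if and only if the ternary operation μ satisfies conditions (M1) and (M2). -/
/-- Condition (M1) for a ternary operation. -/
def CondM1 {M : Type*} (μ : M → M → M → M) : Prop :=
  ∀ a b c d : M, μ a (μ a b c) (μ (μ a b c) c d) = μ a b (μ b c d)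

/-- Condition (M2) for a ternary operation. -/
def CondM2 {M : Type*} (μ : M → M → M → M) : Prop :=
  ∀ a b c d : M, μ (μ a b c) c d = μ (μ a b (μ b c d)) (μ b c d) d

/-- ξ_λ(u)(v) = λ\π⁻¹(μ(π(λ), π(λ·u), π((λ·u)·v))). -/
def xiMap {L M : Type*} (mul ld : L → L → L) (μ : M → M → M → M) (π : L ≃ M)
    (lam u v : L) : L :=
  ld lam (π.symm (μ (π lam) (π (mul lam u)) (π (mul (mul lam u) v))))

/-- R^{(L,M,π)}(λ)(u,v) = ((λ·ξ_λ(u)(v))\((λ·u)·v), ξ_λ(u)(v)). -/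
def Rmap {L M : Type*} (mul ld : L → L → L) (μ : M → M → M → M) (π : L ≃ M)
    (lam : L) (p : L × L) : L × L :=
  (ld (mul lam (xiMap mul ld μ π lam p.1 p.2)) (mul (mul lam p.1) p.2),
    xiMap mul ld μ π lam p.1 p.2)

/-- R applied to components 1,2 of a triple. -/
def r12 {X : Type*} (R : X × X → X × X) (t : X × X × X) : X × X × X :=
  ((R (t.1, t.2.1)).1, (R (t.1, t.2.1)).2, t.2.2)

/-- R applied to components 1,3 of a triple. -/
def r13 {X : Type*} (R : X × X → X × X) (t : X × X × X) : X × X × X :=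
  ((R (t.1, t.2.2)).1, t.2.1, (R (t.1, t.2.2)).2)

/-- R applied to components 2,3 of a triple. -/
def r23 {X : Type*} (R : X × X → X × X) (t : X × X × X) : X × X × X :=
  (t.1, R (t.2.1, t.2.2))

/-- The family R(λ) is a dynamical Yang–Baxter map associated with H, X, φ:
R_23(λ) ∘ R_13(φ(λ,X⁽²⁾)) ∘ R_12(λ) = R_12(φ(λ,X⁽³⁾)) ∘ R_13(λ) ∘ R_23(φ(λ,X⁽¹⁾)). -/
def IsDynamicalYB {H X : Type*} (φ : H → X → H) (R : H → X × X → X × X) : Prop :=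
  ∀ (lam : H) (t : X × X × X),
    r23 (R lam) ((fun t' => r13 (R (φ lam t'.2.1)) t') (r12 (R lam) t))
      =
    (fun t' => r12 (R (φ lam t'.2.2)) t')
      (r13 (R lam) ((fun t' => r23 (R (φ lam t'.1)) t') t))

/-- R^{(L,M,π)} is a dynamical Yang–Baxter map associated with L, L, (·)
iff μ satisfies (M1) and (M2). -/
theorem Rmap_isDynamicalYB_iff {L M : Type*} [Nonempty L] [Nonempty M]
    (mul ld : L → L → L)
    (hmul : ∀ u w : L, mul u (ld u w) = w)
    (hld : ∀ u v : L, ld u (mul u v) = v)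
    (μ : M → M → M → M) (π : L ≃ M) :
    IsDynamicalYB (fun lam u => mul lam u) (Rmap mul ld μ π) ↔
      (CondM1 μ ∧ CondM2 μ) := by
  have inj : ∀ a x y : L, ld a x = ld a y → x = y := by
    intro a x y h
    rw [← hmul a x, h, hmul]
  constructor
  · intro h
    have key : ∀ a b c d : M, μ a (μ a b c) (μ (μ a b c) c d) = μ a b (μ b c d) ∧
        μ (μ a b c) c d = μ (μ a b (μ b c d)) (μ b c d) d := by
      intro a b c d
      have h1 := h (π.symm a) (ld (π.symm a) (π.symm b), ld (π.symm b) (π.symm c),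
        ld (π.symm c) (π.symm d))
      simp only [r12, r13, r23, Rmap, xiMap, hmul, Equiv.apply_symm_apply, Prod.mk.injEq] at h1
      obtain ⟨-, h2, h3⟩ := h1
      have h4 := π.symm.injective (inj _ _ _ h3)
      rw [h4] at h2
      exact ⟨h4, π.symm.injective (inj _ _ _ h2)⟩
    exact ⟨fun a b c d => (key a b c d).1, fun a b c d => (key a b c d).2⟩
  · rintro ⟨h1, h2⟩ lam ⟨u, v, w⟩
    simp only [r12, r13, r23, Rmap, xiMap, hmul, Equiv.apply_symm_apply, Prod.mk.injEq]
    rw [h1, ← h2]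
    exact ⟨rfl, rfl, rfl⟩
end

section
/- Let (L,·) be a left quasigroup, (M,μ) a ternary system, and π : L → M a bijection. For λ ∈ L define f_λ : L³ → L³ by f_λ(u,v,w) = (λ·u, (λ·u)·v, ((λ·u)·v)·w), the maps σ(λ)(u,v) = (ξ_λ(u)(v), (λ·ξ_λ(u)(v))\((λ·u)·v)), σ(λ)_{12}(u,v,w) = (σ(λ)(u,v), w), σ(λL⁽¹⁾)_{23}(u,v,w) = (u, σ(λ·u)(v,w)), and the maps s(a)_{12}(x,y,z) = (μ(a,x,y), y, z) and s(x,y,z) = (x, μ(x,y,z), z) on M³. Then: (i) f_λ is a bijection with inverse (u,v,w) ↦ (λ\u, u\v, v\w); (ii) σ(λ)_{12} = f_λ⁻¹ ∘ (π⁻¹×π⁻¹×π⁻¹) ∘ s(π(λ))_{12} ∘ (π×π×π) ∘ f_λ; and (iii) σ(λL⁽¹⁾)_{23} = f_λ⁻¹ ∘ (π⁻¹×π⁻¹×π⁻¹) ∘ s ∘ (π×π×π) ∘ f_λ. -/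
/-- σ(λ)(u,v) = (ξ_λ(u)(v), (λ·ξ_λ(u)(v))\((λ·u)·v)). -/
def sigmaMap {L M : Type*} (mul ld : L → L → L) (μ : M → M → M → M) (π : L ≃ M)
    (lam : L) (p : L × L) : L × L :=
  (xiMap mul ld μ π lam p.1 p.2,
    ld (mul lam (xiMap mul ld μ π lam p.1 p.2)) (mul (mul lam p.1) p.2))

/-- σ(λ)_{12}(u,v,w) = (σ(λ)(u,v), w). -/
def sigma12 {L M : Type*} (mul ld : L → L → L) (μ : M → M → M → M) (π : L ≃ M)
    (lam : L) (t : L × L × L) : L × L × L :=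
  ((sigmaMap mul ld μ π lam (t.1, t.2.1)).1,
    (sigmaMap mul ld μ π lam (t.1, t.2.1)).2, t.2.2)

/-- σ(λ L⁽¹⁾)_{23}(u,v,w) = (u, σ(λ·u)(v,w)). -/
def sigma23dyn {L M : Type*} (mul ld : L → L → L) (μ : M → M → M → M) (π : L ≃ M)
    (lam : L) (t : L × L × L) : L × L × L :=
  (t.1, sigmaMap mul ld μ π (mul lam t.1) (t.2.1, t.2.2))

/-- f_λ(u,v,w) = (λ·u, (λ·u)·v, ((λ·u)·v)·w). -/
def fLam {L : Type*} (mul : L → L → L) (lam : L) (t : L × L × L) : L × L × L :=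
  (mul lam t.1, mul (mul lam t.1) t.2.1, mul (mul (mul lam t.1) t.2.1) t.2.2)

/-- The candidate inverse of f_λ: (u,v,w) ↦ (λ\u, u\v, v\w). -/
def fLamInv {L : Type*} (ld : L → L → L) (lam : L) (t : L × L × L) : L × L × L :=
  (ld lam t.1, ld t.1 t.2.1, ld t.2.1 t.2.2)

/-- s(a)_{12}(x,y,z) = (μ(a,x,y), y, z). -/
def sa12 {M : Type*} (μ : M → M → M → M) (a : M) (t : M × M × M) : M × M × M :=
  (μ a t.1 t.2.1, t.2.1, t.2.2)

/-- s(x,y,z) = (x, μ(x,y,z), z). -/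
def sMap {M : Type*} (μ : M → M → M → M) (t : M × M × M) : M × M × M :=
  (t.1, μ t.1 t.2.1 t.2.2, t.2.2)

/-- π×π×π on triples. -/
def pi3 {L M : Type*} (π : L ≃ M) (t : L × L × L) : M × M × M :=
  (π t.1, π t.2.1, π t.2.2)

/-- π⁻¹×π⁻¹×π⁻¹ on triples. -/
def pi3inv {L M : Type*} (π : L ≃ M) (t : M × M × M) : L × L × L :=
  (π.symm t.1, π.symm t.2.1, π.symm t.2.2)

/-- f_λ is a bijection with the stated inverse, and
σ(λ)₁₂ and σ(λL⁽¹⁾)₂₃ are conjugates of s(π(λ))₁₂ and s by (π×π×π) ∘ f_λ. -/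
theorem sigma_conjugation {L M : Type*} [Nonempty L] [Nonempty M]
    (mul ld : L → L → L)
    (hmul : ∀ u w : L, mul u (ld u w) = w)
    (hld : ∀ u v : L, ld u (mul u v) = v)
    (μ : M → M → M → M) (π : L ≃ M) :
    ∀ lam : L,
      Function.Bijective (fLam mul lam) ∧
      (∀ t : L × L × L, fLamInv ld lam (fLam mul lam t) = t) ∧
      (∀ t : L × L × L, fLam mul lam (fLamInv ld lam t) = t) ∧
      sigma12 mul ld μ π lam
        = fLamInv ld lam ∘ pi3inv π ∘ sa12 μ (π lam) ∘ pi3 π ∘ fLam mul lam ∧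
      sigma23dyn mul ld μ π lam
        = fLamInv ld lam ∘ pi3inv π ∘ sMap μ ∘ pi3 π ∘ fLam mul lam := by
  intro lam
  have h1 : ∀ t : L × L × L, fLamInv ld lam (fLam mul lam t) = t := by
    rintro ⟨u, v, w⟩
    simp [fLam, fLamInv, hld]
  have h2 : ∀ t : L × L × L, fLam mul lam (fLamInv ld lam t) = t := by
    rintro ⟨u, v, w⟩
    simp [fLam, fLamInv, hmul]
  refine ⟨⟨Function.LeftInverse.injective h1, Function.RightInverse.surjective h2⟩,
    h1, h2, ?_, ?_⟩
  · funext ⟨u, v, w⟩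
    simp [sigma12, sigmaMap, xiMap, fLam, fLamInv, pi3, pi3inv, sa12, hmul, hld]
  · funext ⟨u, v, w⟩
    simp [sigma23dyn, sigmaMap, xiMap, fLam, fLamInv, pi3, pi3inv, sMap, hmul, hld]
end

section
/- Let (L,·) be a left quasigroup, let (M,μ) and (M',μ') be ternary systems satisfying conditions (M1) and (M2), and let π : L → M and π' : L → M' be bijections. Then R^{(L,M,π)}(λ) = R^{(L,M',π')}(λ) for all λ ∈ L if and only if the map h = π' ∘ π⁻¹ : M → M' is a homomorphism of ternary systems, i.e. h(μ(a,b,c)) = μ'(h(a), h(b), h(c)) for all a,b,c ∈ M. -/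
/-- R^{(L,M,π)}(λ) = R^{(L,M',π')}(λ) for all λ iff
h = π' ∘ π⁻¹ is a homomorphism of ternary systems. -/
theorem Rmap_eq_iff_hom {L M M' : Type*} [Nonempty L]
    (mul ld : L → L → L)
    (hmul : ∀ u w : L, mul u (ld u w) = w)
    (hld : ∀ u v : L, ld u (mul u v) = v)
    (μ : M → M → M → M) (μ' : M' → M' → M' → M')
    (hM1 : CondM1 μ) (hM2 : CondM2 μ) (hM1' : CondM1 μ') (hM2' : CondM2 μ')
    (π : L ≃ M) (π' : L ≃ M') :
    (∀ lam : L, Rmap mul ld μ π lam = Rmap mul ld μ' π' lam) ↔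
      (∀ a b c : M,
        π' (π.symm (μ a b c))
          = μ' (π' (π.symm a)) (π' (π.symm b)) (π' (π.symm c))) := by
  constructor
  · intro h a b c
    have h1 := congrArg Prod.snd
      (congrFun (h (π.symm a)) (ld (π.symm a) (π.symm b), ld (π.symm b) (π.symm c)))
    simp only [Rmap, xiMap, hmul, Equiv.apply_symm_apply] at h1
    have h2 := congrArg (mul (π.symm a)) h1
    rw [hmul, hmul] at h2
    rw [h2, Equiv.apply_symm_apply]
  · intro h lam
    have key : ∀ u v, xiMap mul ld μ π lam u v = xiMap mul ld μ' π' lam u v := by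
      intro u v
      have h1 := h (π lam) (π (mul lam u)) (π (mul (mul lam u) v))
      simp only [Equiv.symm_apply_apply] at h1
      simp only [xiMap]
      rw [← h1, Equiv.symm_apply_apply]
    funext p
    simp only [Rmap, key]
end

section
/- Let (L,·) and (L',·) be left quasigroups, (M,μ) and (M',μ') ternary systems satisfying conditions (M1) and (M2), and π : L → M, π' : L' → M' bijections. Let f : L → L' satisfy f(u·v) = f(u)·f(v) for all u,v ∈ L, and suppose π' ∘ f ∘ π⁻¹ : M → M' is a homomorphism of ternary systems, i.e. (π'∘f∘π⁻¹)(μ(a,b,c)) = μ'((π'∘f∘π⁻¹)(a), (π'∘f∘π⁻¹)(b), (π'∘f∘π⁻¹)(c)) for all a,b,c ∈ M. Then R^{(L',M',π')}(f(λ)) ∘ (f×f) = (f×f) ∘ R^{(L,M,π)}(λ) for all λ ∈ L. -/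
/-- if f : L → L' is multiplicative and π' ∘ f ∘ π⁻¹ is a homomorphism
of ternary systems, then R^{(L',M',π')}(f(λ)) ∘ (f×f) = (f×f) ∘ R^{(L,M,π)}(λ). -/
theorem Rmap_intertwines {L L' M M' : Type*} [Nonempty L] [Nonempty L']
    (mul ld : L → L → L)
    (hmul : ∀ u w : L, mul u (ld u w) = w)
    (hld : ∀ u v : L, ld u (mul u v) = v)
    (mul' ld' : L' → L' → L')
    (hmul' : ∀ u w : L', mul' u (ld' u w) = w)
    (hld' : ∀ u v : L', ld' u (mul' u v) = v)
    (μ : M → M → M → M) (μ' : M' → M' → M' → M')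
    (hM1 : CondM1 μ) (hM2 : CondM2 μ) (hM1' : CondM1 μ') (hM2' : CondM2 μ')
    (π : L ≃ M) (π' : L' ≃ M')
    (f : L → L')
    (hf : ∀ u v : L, f (mul u v) = mul' (f u) (f v))
    (hhom : ∀ a b c : M,
      π' (f (π.symm (μ a b c)))
        = μ' (π' (f (π.symm a))) (π' (f (π.symm b))) (π' (f (π.symm c)))) :
    ∀ lam : L,
      Rmap mul' ld' μ' π' (f lam) ∘ Prod.map f f
        = Prod.map f f ∘ Rmap mul ld μ π lam := by
  have hfld : ∀ u w : L, f (ld u w) = ld' (f u) (f w) := by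
    intro u w
    have h := hf u (ld u w)
    rw [hmul] at h
    rw [h, hld']
  have hxi : ∀ lam u v : L,
      xiMap mul' ld' μ' π' (f lam) (f u) (f v) = f (xiMap mul ld μ π lam u v) := by
    intro lam u v
    have h := hhom (π lam) (π (mul lam u)) (π (mul (mul lam u) v))
    simp only [Equiv.symm_apply_apply, hf] at h
    unfold xiMap
    rw [hfld, ← h, Equiv.symm_apply_apply]
  intro lam
  funext p
  obtain ⟨u, v⟩ := p
  simp only [Function.comp_apply, Prod.map_apply, Rmap, hxi, hfld, hf]
end

section
/- Let (L,·) be a left quasigroup and let R(λ) : L×L → L×L (λ ∈ L) be a dynamical Yang–Baxter map associated with L, L, and the multiplication (φ(λ,u) = λ·u). Write R(λ)(u,v) = (η_λ(v)(u), ξ_λ(u)(v)), and assume the invariance condition (λ·ξ_λ(u)(v))·η_λ(v)(u) = (λ·u)·v holds for all λ,u,v ∈ L. Then the ternary operation μ_L on L defined by μ_L(a,b,c) = a·ξ_a(a\b)(b\c) satisfies conditions (M1) and (M2). -/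
/-- if R(λ) is a dynamical YB map associated with L, L, (·) satisfying the
invariance condition, where R(λ)(u,v) = (η_λ(v)(u), ξ_λ(u)(v)), then
μ_L(a,b,c) = a·ξ_a(a\b)(b\c) satisfies (M1) and (M2). -/
theorem muL_satisfies_M1_M2 {L : Type*} [Nonempty L]
    (mul ld : L → L → L)
    (hmul : ∀ u w : L, mul u (ld u w) = w)
    (hld : ∀ u v : L, ld u (mul u v) = v)
    (R : L → L × L → L × L)
    (hYB : IsDynamicalYB (fun lam u => mul lam u) R)
    (hinv : ∀ lam u v : L,
      mul (mul lam (R lam (u, v)).2) (R lam (u, v)).1 = mul (mul lam u) v) :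
    CondM1 (fun a b c => mul a (R a (ld a b, ld b c)).2) ∧
      CondM2 (fun a b c => mul a (R a (ld a b, ld b c)).2) := by
  obtain ⟨μ, hμ⟩ : ∃ μ : L → L → L → L, μ = fun a b c => mul a (R a (ld a b, ld b c)).2 :=
    ⟨_, rfl⟩
  rw [← hμ]
  have hR : ∀ a b c, R a (ld a b, ld b c) = (ld (μ a b c) c, ld a (μ a b c)) := by
    intro a b c
    have h := hinv a (ld a b) (ld b c)
    rw [hmul, hmul] at h
    have h1 : μ a b c = mul a (R a (ld a b, ld b c)).2 := by rw [hμ]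
    rw [← h1] at h
    refine Prod.ext ?_ ?_
    · change _ = ld (μ a b c) c
      conv_rhs => rw [← h]
      rw [h, ← hld (μ a b c) (R a (ld a b, ld b c)).1, h]
    · change _ = ld a (μ a b c)
      rw [h1, hld]
  have cancel : ∀ a x y, ld a x = ld a y → x = y := by
    intro a x y h
    rw [← hmul a x, h, hmul]
  have key : ∀ a b c d, μ a (μ a b c) (μ (μ a b c) c d) = μ a b (μ b c d) ∧
      μ (μ a b c) c d = μ (μ a b (μ b c d)) (μ b c d) d := by
    intro a b c d
    have h := hYB a (ld a b, ld b c, ld c d)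
    simp only [r12, r13, r23, hR, hmul, Prod.mk.injEq] at h
    obtain ⟨-, h2, h3⟩ := h
    have h4 := cancel _ _ _ h3
    rw [h4] at h2
    exact ⟨h4, cancel _ _ _ h2⟩
  exact ⟨fun a b c d => (key a b c d).1, fun a b c d => (key a b c d).2⟩
end

section
/- Let (G,*) be a left quasigroup satisfying condition (5.1). Then the ternary operations on G defined by μ^G_1(a,b,c) = a*(b\c) and μ^G_2(a,b,c) = c*(b\a) both satisfy conditions (M1) and (M2). -/
/-- Condition (5.1) on a left quasigroup:
(a*c)\((a*b)*c) = (a'*c)\((a'*b)*c) for all a, a', b, c. -/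
def Cond51 {G : Type*} (mul ld : G → G → G) : Prop :=
  ∀ a a' b c : G,
    ld (mul a c) (mul (mul a b) c) = ld (mul a' c) (mul (mul a' b) c)

/-- if (G,*) is a left quasigroup satisfying (5.1), then
μ^G_1(a,b,c) = a*(b\c) and μ^G_2(a,b,c) = c*(b\a) satisfy (M1) and (M2). -/
theorem muG1_muG2_satisfy_M1_M2 {G : Type*} [Nonempty G]
    (mul ld : G → G → G)
    (hmul : ∀ u w : G, mul u (ld u w) = w)
    (hld : ∀ u v : G, ld u (mul u v) = v)
    (h51 : Cond51 mul ld) :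
    (CondM1 (fun a b c => mul a (ld b c)) ∧ CondM2 (fun a b c => mul a (ld b c))) ∧
      (CondM1 (fun a b c => mul c (ld b a)) ∧ CondM2 (fun a b c => mul c (ld b a))) := by
  have key : ∀ a b x y : G,
      mul (mul a y) (ld (mul b y) (mul (mul b x) y)) = mul (mul a x) y := by
    intro a b x y
    rw [h51 b a x y, hmul]
  refine ⟨⟨?_, ?_⟩, ?_, ?_⟩
  · intro a b c d
    simp only [hld]
  · intro a b c d
    have h := key a b (ld b c) (ld c d)
    simp only [hmul] at h
    simp only [hld]
    exact h.symm
  · intro a b c d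
    have h := key d c (ld c b) (ld b a)
    simp only [hmul] at h
    simp only [hld]
    exact h
  · intro a b c d
    simp only [hld]
end

section
/- Let (M,μ) be a ternary system satisfying conditions (M1) and (M2) and additionally μ(a, b, μ(b,c,d)) = μ(a,c,d) for all a,b,c,d ∈ M and μ(a,a,b) = b for all a,b ∈ M. Fix any e ∈ M and define a*b := μ(a,e,b). Then: (i) (M,*) is a left quasigroup, with left division a\c = μ(e,a,c) (i.e. a*μ(e,a,c) = c and μ(e,a,a*b) = b for all a,b,c ∈ M); (ii) (M,*) satisfies condition (5.1); and (iii) μ(a,b,c) = a*(b\c) for all a,b,c ∈ M, i.e. μ coincides with the ternary operation μ^G_1 of the left quasigroup (M,*). -/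
/-- a ternary system satisfying (M1), (M2), μ(a,b,μ(b,c,d)) = μ(a,c,d) and
μ(a,a,b) = b arises as μ^G_1 of a left quasigroup, with a*b := μ(a,e,b),
left division a\c = μ(e,a,c). -/
theorem ternary_eq_muG1 {M : Type*} [Nonempty M] (μ : M → M → M → M)
    (hM1 : CondM1 μ) (hM2 : CondM2 μ)
    (h1 : ∀ a b c d : M, μ a b (μ b c d) = μ a c d)
    (h2 : ∀ a b : M, μ a a b = b)
    (e : M) :
    ((∀ u w : M, ∃! v : M, μ u e v = w) ∧
      (∀ a c : M, μ a e (μ e a c) = c) ∧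
      (∀ a b : M, μ e a (μ a e b) = b)) ∧
    Cond51 (fun a b => μ a e b) (fun a c => μ e a c) ∧
    (∀ a b c : M, μ a b c = μ a e (μ e b c)) := by
  have key : ∀ a b c : M, μ e (μ a e c) (μ (μ a e b) e c) = μ e c (μ b e c) := by
    intro a b c
    have h := hM2 a e b (μ b e c)
    have h' : μ e b (μ b e c) = c := by rw [h1, h2]
    rw [h', h1] at h
    rw [h, h1]
  refine ⟨⟨fun u w => ⟨μ e u w, ?_, ?_⟩, ?_, ?_⟩, ?_, ?_⟩
  · show μ u e (μ e u w) = w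
    rw [h1, h2]
  · intro v hv
    have hv' : μ u e v = w := hv
    rw [← hv', h1, h2]
  · intro a c
    rw [h1, h2]
  · intro a b
    rw [h1, h2]
  · intro a a' b c
    show μ e (μ a e c) (μ (μ a e b) e c) = μ e (μ a' e c) (μ (μ a' e b) e c)
    rw [key, key]
  · intro a b c
    rw [h1]
end

section
/- Let (M,μ) be a ternary system satisfying conditions (M1) and (M2) and additionally μ(μ(a,b,c), c, d) = μ(a,b,d) for all a,b,c,d ∈ M and μ(a,b,b) = a for all a,b ∈ M. Fix any e ∈ M and define a*b := μ(b,e,a). Then: (i) (M,*) is a left quasigroup, with left division a\c = μ(c,a,e); (ii) (M,*) satisfies condition (5.1); and (iii) μ(a,b,c) = c*(b\a) for all a,b,c ∈ M, i.e. μ coincides with the ternary operation μ^G_2 of the left quasigroup (M,*). -/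
/-- a ternary system satisfying (M1), (M2), μ(μ(a,b,c),c,d) = μ(a,b,d) and
μ(a,b,b) = a arises as μ^G_2 of a left quasigroup, with a*b := μ(b,e,a),
left division a\c = μ(c,a,e). -/
theorem ternary_eq_muG2 {M : Type*} [Nonempty M] (μ : M → M → M → M)
    (hM1 : CondM1 μ) (hM2 : CondM2 μ)
    (h1 : ∀ a b c d : M, μ (μ a b c) c d = μ a b d)
    (h2 : ∀ a b : M, μ a b b = a)
    (e : M) :
    ((∀ u w : M, ∃! v : M, μ v e u = w) ∧
      (∀ a c : M, μ (μ c a e) e a = c) ∧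
      (∀ a b : M, μ (μ b e a) a e = b)) ∧
    Cond51 (fun a b => μ b e a) (fun a c => μ c a e) ∧
    (∀ a b c : M, μ a b c = μ (μ a b e) e c) := by
  have inv : ∀ a b c : M, μ (μ a b c) c b = a := fun a b c => by rw [h1, h2]
  refine ⟨⟨fun u w => ⟨μ w u e, inv _ _ _, ?_⟩, fun a c => inv _ _ _, fun a b => inv _ _ _⟩, ?_,
    fun a b c => (h1 a b e c).symm⟩
  · intro v hv
    have hv' : μ v e u = w := hv
    rw [← hv', inv]
  · have key : ∀ a b c : M, μ (μ c e (μ b e a)) (μ c e a) e = μ (μ c e b) c e := by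
      intro a b c
      have h := hM1 (μ c e (μ b e a)) (μ b e a) a e
      simp only [h1, h2] at h
      rw [← h, h1]
    intro a a' b c
    exact (key a b c).trans (key a' b c).symm
end

section
/- Let (M,μ) be a ternary system satisfying conditions (M1) and (M2) and additionally μ(a,b,c) = μ(d, b, μ(a,d,c)) for all a,b,c,d ∈ M and μ(a,a,b) = b for all a,b ∈ M. Fix any e ∈ M and define a*b := μ(e,a,b). Then: (i) (M,*) is a left quasigroup, with left division a\c = μ(a,e,c); (ii) (M,*) satisfies conditions (5.6) and (5.7); and (iii) μ(a,b,c) = b*(a\c) for all a,b,c ∈ M, i.e. μ coincides with the ternary operation μ^G_3 of the left quasigroup (M,*). -/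
/-- Condition (5.6) on a left quasigroup:
(b*c)*(a\((a*c)*((b*c)\(b*d)))) = b*(a\((a*c)*d)). -/
def Cond56 {G : Type*} (mul ld : G → G → G) : Prop :=
  ∀ a b c d : G,
    mul (mul b c) (ld a (mul (mul a c) (ld (mul b c) (mul b d))))
      = mul b (ld a (mul (mul a c) d))

/-- Condition (5.7) on a left quasigroup:
(a*c)*((b*c)\(b*d)) = ((a*c)*d)*((b*(a\((a*c)*d)))\(b*d)). -/
def Cond57 {G : Type*} (mul ld : G → G → G) : Prop :=
  ∀ a b c d : G,
    mul (mul a c) (ld (mul b c) (mul b d))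
      = mul (mul (mul a c) d) (ld (mul b (ld a (mul (mul a c) d))) (mul b d))

/-- a ternary system satisfying (M1), (M2), μ(a,b,c) = μ(d,b,μ(a,d,c)) and
μ(a,a,b) = b arises as μ^G_3 of a left quasigroup, with a*b := μ(e,a,b),
left division a\c = μ(a,e,c). -/
theorem ternary_eq_muG3 {M : Type*} [Nonempty M] (μ : M → M → M → M)
    (hM1 : CondM1 μ) (hM2 : CondM2 μ)
    (h1 : ∀ a b c d : M, μ a b c = μ d b (μ a d c))
    (h2 : ∀ a b : M, μ a a b = b)
    (e : M) :
    ((∀ u w : M, ∃! v : M, μ e u v = w) ∧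
      (∀ a c : M, μ e a (μ a e c) = c) ∧
      (∀ a b : M, μ a e (μ e a b) = b)) ∧
    (Cond56 (fun a b => μ e a b) (fun a c => μ a e c) ∧
      Cond57 (fun a b => μ e a b) (fun a c => μ a e c)) ∧
    (∀ a b c : M, μ a b c = μ e b (μ a e c)) := by
  have h : ∀ a b c d : M, μ d b (μ a d c) = μ a b c := fun a b c d => (h1 a b c d).symm
  refine ⟨⟨fun u w => ⟨μ u e w, ?_, ?_⟩, ?_, ?_⟩, ⟨?_, ?_⟩, fun a b c => h1 a b c e⟩
  · simp only [h, h2]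
  · intro y hy
    simp only [← hy, h, h2]
  · intro a c
    simp only [h, h2]
  · intro a b
    simp only [h, h2]
  · intro a b c d
    have := hM1 a b (μ e a c) (μ e b d)
    simp only [h, h2] at this ⊢
    exact this
  · intro a b c d
    have := hM2 a b (μ e a c) (μ e b d)
    simp only [h, h2] at this ⊢
    exact this
end

section
/- Let (L,·) be a left quasigroup, (M,μ) a ternary system satisfying conditions (M1) and (M2), and π : L → M a bijection. The dynamical Yang–Baxter map R^{(L,M,π)}(λ) satisfies the unitary condition R^{(L,M,π)}(λ) ∘ P ∘ R^{(L,M,π)}(λ) = P for all λ ∈ L (where P(u,v) = (v,u)) if and only if μ(a, μ(a,b,c), c) = b for all a,b,c ∈ M. -/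
/-- R^{(L,M,π)}(λ) satisfies the unitary condition
R(λ) ∘ P ∘ R(λ) = P for all λ iff μ(a, μ(a,b,c), c) = b for all a,b,c. -/
theorem unitary_iff {L M : Type*} [Nonempty L] [Nonempty M]
    (mul ld : L → L → L)
    (hmul : ∀ u w : L, mul u (ld u w) = w)
    (hld : ∀ u v : L, ld u (mul u v) = v)
    (μ : M → M → M → M)
    (hM1 : CondM1 μ) (hM2 : CondM2 μ)
    (π : L ≃ M) :
    (∀ lam : L,
        Rmap mul ld μ π lam ∘ Prod.swap ∘ Rmap mul ld μ π lam = Prod.swap) ↔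
      (∀ a b c : M, μ a (μ a b c) c = b) := by
  constructor
  · intro h a b c
    have h1 := congrFun (h (π.symm a))
      (ld (π.symm a) (π.symm b), ld (π.symm b) (π.symm c))
    have h2 := congrArg (fun p => π (mul (π.symm a) p.2)) h1
    simpa [Rmap, xiMap, hmul] using h2
  · intro h lam
    funext p
    obtain ⟨u, v⟩ := p
    simp [Rmap, xiMap, hmul, hld, h]
end

section
/- Let (L₁,·) and (L₂,·) be left quasigroups, (M,μ) a ternary system satisfying conditions (M1) and (M2), and π₁ : L₁ → M, π₂ : L₂ → M bijections. Set g = π₂⁻¹ ∘ π₁ : L₁ → L₂. For λ ∈ Lᵢ define f̃⁽ⁱ⁾_λ(u,v) = (λ·u, (λ·u)·v) on Lᵢ×Lᵢ, and let P_{Lᵢ}(u,v) = (v,u). For λ₁ ∈ L₁ define J(λ₁) = (f̃⁽²⁾_{g(λ₁)})⁻¹ ∘ (g×g) ∘ f̃⁽¹⁾_{λ₁} ∘ P_{L₁} : L₁×L₁ → L₂×L₂, J²¹(λ₁) = P_{L₂} ∘ J(λ₁) ∘ P_{L₁}, and R^{(L₂,M,π₂) 21}(λ₂) = P_{L₂}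 ∘ R^{(L₂,M,π₂)}(λ₂) ∘ P_{L₂}. Then for every λ₁ ∈ L₁: R^{(L₁,M,π₁)}(λ₁) = J(λ₁)⁻¹ ∘ R^{(L₂,M,π₂) 21}(g(λ₁)) ∘ J²¹(λ₁). -/
/-- f̃_λ(u,v) = (λ·u, (λ·u)·v). -/
def fTilde {L : Type*} (mul : L → L → L) (lam : L) (p : L × L) : L × L :=
  (mul lam p.1, mul (mul lam p.1) p.2)

/-- The inverse of f̃_λ: (u,v) ↦ (λ\u, u\v). -/
def fTildeInv {L : Type*} (ld : L → L → L) (lam : L) (p : L × L) : L × L :=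
  (ld lam p.1, ld p.1 p.2)

/-- IRF-IRF correspondence: with g = π₂⁻¹ ∘ π₁,
J(λ₁) = (f̃⁽²⁾_{g(λ₁)})⁻¹ ∘ (g×g) ∘ f̃⁽¹⁾_{λ₁} ∘ P, J²¹(λ₁) = P ∘ J(λ₁) ∘ P, and
R²¹(λ₂) = P ∘ R^{(L₂,M,π₂)}(λ₂) ∘ P, one has
R^{(L₁,M,π₁)}(λ₁) = J(λ₁)⁻¹ ∘ R²¹(g(λ₁)) ∘ J²¹(λ₁). -/
theorem IRF_IRF_correspondence {L₁ L₂ M : Type*} [Nonempty L₁] [Nonempty L₂]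
    (mul₁ ld₁ : L₁ → L₁ → L₁)
    (hmul₁ : ∀ u w : L₁, mul₁ u (ld₁ u w) = w)
    (hld₁ : ∀ u v : L₁, ld₁ u (mul₁ u v) = v)
    (mul₂ ld₂ : L₂ → L₂ → L₂)
    (hmul₂ : ∀ u w : L₂, mul₂ u (ld₂ u w) = w)
    (hld₂ : ∀ u v : L₂, ld₂ u (mul₂ u v) = v)
    (μ : M → M → M → M)
    (hM1 : CondM1 μ) (hM2 : CondM2 μ)
    (π₁ : L₁ ≃ M) (π₂ : L₂ ≃ M) :
    ∀ lam₁ : L₁,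
      let g : L₁ → L₂ := fun u => π₂.symm (π₁ u)
      let ginv : L₂ → L₁ := fun u => π₁.symm (π₂ u)
      let J : L₁ × L₁ → L₂ × L₂ :=
        fTildeInv ld₂ (g lam₁) ∘ Prod.map g g ∘ fTilde mul₁ lam₁ ∘ Prod.swap
      let Jinv : L₂ × L₂ → L₁ × L₁ :=
        Prod.swap ∘ fTildeInv ld₁ lam₁ ∘ Prod.map ginv ginv ∘ fTilde mul₂ (g lam₁)
      let J21 : L₁ × L₁ → L₂ × L₂ := Prod.swap ∘ J ∘ Prod.swap
      let R21 : L₂ × L₂ → L₂ × L₂ :=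
        Prod.swap ∘ Rmap mul₂ ld₂ μ π₂ (g lam₁) ∘ Prod.swap
      (∀ p : L₁ × L₁, Jinv (J p) = p) ∧
      (∀ p : L₂ × L₂, J (Jinv p) = p) ∧
      Rmap mul₁ ld₁ μ π₁ lam₁ = Jinv ∘ R21 ∘ J21 := by
  intro lam₁
  refine ⟨?_, ?_, ?_⟩
  · rintro ⟨u, v⟩
    simp [fTilde, fTildeInv, hmul₁, hld₁, hmul₂, hld₂]
  · rintro ⟨u, v⟩
    simp [fTilde, fTildeInv, hmul₁, hld₁, hmul₂, hld₂]
  · funext ⟨u, v⟩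
    simp [fTilde, fTildeInv, Rmap, xiMap, hmul₁, hld₁, hmul₂, hld₂]
end
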